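/- Vanishing of the hydrodynamic projection of v·∇ₓ f₁ under incompressibility and the Boussinesq relation: let ρ, θ : U → ℝ and u : U → ℝ³ be differentiable at x ∈ U ⊂ ℝ³ with (∇·u)(x) = 0 and ∇(ρ + θ)(x) = 0, and let f₁(x,v) = (ρ(x) + u(x)·v + θ(x)(|v|²−3)/2) √μ(v). Then ∫_{ℝ³} (v·∇ₓ f₁)(x,v) φ(v) √μ(v) dv = 0 for every φ in {1, v₁, v₂, v₃, |v|²/2}. -/

import Mathlib

open MeasureTheory Real
open scoped RealInnerProductSpace

noncomputable section

/-- The global Maxwellian `μ(v) = (2π)^{−3/2} e^{−|v|²/2}`. -/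
def globalMaxwellian (v : EuclideanSpace ℝ (Fin 3)) : ℝ :=
  (2 * Real.pi) ^ (-(3 : ℝ) / 2) * Real.exp (-‖v‖ ^ 2 / 2)

/-- The first-order Hilbert correction
`f₁(x,v) = (ρ(x) + u(x)·v + θ(x)(|v|²−3)/2) √μ(v)`. -/
def hilbertFirst (ρ θ : EuclideanSpace ℝ (Fin 3) → ℝ)
    (u : EuclideanSpace ℝ (Fin 3) → EuclideanSpace ℝ (Fin 3))
    (x v : EuclideanSpace ℝ (Fin 3)) : ℝ :=
  (ρ x + ⟪u x, v⟫ + θ x * (‖v‖ ^ 2 - 3) / 2) * Real.sqrt (globalMaxwellian v)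

/-!
Since `∇ρ = -∇θ`, the transport term is `v · ∇ₓ f₁ = (⟪∇u v, v⟫ + ∇θ · B(v)) √μ` with the Burnett
field `B(v) = (|v|² - 5) v / 2`. Its moments of odd total degree vanish under `v ↦ -v`. The others
come from Gaussian integration by parts, `∫ ⟪c, v⟫ f e^{-|v|²/2} = ∫ ∂_c f e^{-|v|²/2}`. Summed over
an orthonormal frame, it turns `⟪A v, v⟫` into the trace of `A`, which is `∇·u = 0` for `A = ∇u`;
and it makes `B` orthogonal to linear functions because `∫ |v|² e^{-|v|²/2} = d ∫ e^{-|v|²/2}`.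
-/

section Oddness

variable {G F : Type*} [MeasurableSpace G] [AddGroup G] [MeasurableNeg G]
  [NormedAddCommGroup F] [NormedSpace ℝ F]

theorem integral_eq_zero_of_odd {f : G → F} (hf : f.Odd) (ν : Measure G) [ν.IsNegInvariant] :
    ∫ v, f v ∂ν = 0 := by
  have : IsAddTorsionFree F := .of_isTorsionFree ℝ F
  have h : ∫ v, f v ∂ν = -∫ v, f v ∂ν := by
    rw [← integral_neg, ← integral_neg_eq_self]
    exact integral_congr_ae (.of_forall hf)
  exact self_eq_neg.mp h

end Oddness

section TemperateGrowth

variable {E F : Type*} [NormedAddCommGroup E] [NormedSpace ℝ E]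
  [NormedAddCommGroup F] [NormedSpace ℝ F]

theorem hasTemperateGrowth_fderiv_apply {f : E → F} (hf : f.HasTemperateGrowth) (c : E) :
    (fun v ↦ fderiv ℝ f v c).HasTemperateGrowth := by
  have hfderiv : (fderiv ℝ f).HasTemperateGrowth := by
    refine ⟨hf.1.fderiv_right (by simp), fun n ↦ ?_⟩
    simpa only [norm_iteratedFDeriv_fderiv] using hf.2 (n + 1)
  exact (ContinuousLinearMap.apply ℝ F c).hasTemperateGrowth.comp hfderiv

end TemperateGrowth

section ProductRule

variable {E : Type*} [NormedAddCommGroup E] [NormedSpace ℝ E]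

theorem fderiv_map_mul_apply (ℓ : E →L[ℝ] ℝ) {f : E → ℝ} {v : E} (hf : DifferentiableAt ℝ f v)
    (c : E) : fderiv ℝ (fun w ↦ ℓ w * f w) v c = ℓ c * f v + ℓ v * fderiv ℝ f v c := by
  rw [fderiv_fun_mul ℓ.differentiableAt hf]
  simp only [ContinuousLinearMap.fderiv, add_apply, smul_apply, smul_eq_mul]
  ring

end ProductRule

section GaussianWeight

variable {E : Type*} [NormedAddCommGroup E]

/-- The Gaussian density `e^{-|v|²/2}` in any dimension. It is left unnormalised: only vanishing
moments matter, so the constant `(2π)^{-d/2}` of the Maxwellian plays no role. -/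
def gaussianWeight (v : E) : ℝ :=
  exp (-‖v‖ ^ 2 / 2)

theorem even_gaussianWeight : (gaussianWeight : E → ℝ).Even := fun v ↦ by
  simp [gaussianWeight]

theorem one_add_norm_pow_mul_gaussianWeight_le (k : ℕ) (v : E) :
    (1 + ‖v‖) ^ k * gaussianWeight v ≤ k.factorial * exp 2 * exp (-(1 / 4) * ‖v‖ ^ 2) := by
  have hpow : (1 + ‖v‖) ^ k ≤ k.factorial * exp (1 + ‖v‖) := by
    rw [← div_le_iff₀' (by positivity)]
    exact pow_div_factorial_le_exp (1 + ‖v‖) (by positivity) k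
  have hexponent : 1 + ‖v‖ + -‖v‖ ^ 2 / 2 ≤ 2 + -(1 / 4) * ‖v‖ ^ 2 := by
    linarith [sq_nonneg (‖v‖ / 2 - 1)]
  calc (1 + ‖v‖) ^ k * gaussianWeight v
      ≤ k.factorial * exp (1 + ‖v‖) * exp (-‖v‖ ^ 2 / 2) := by
        rw [gaussianWeight]; gcongr
    _ = k.factorial * exp (1 + ‖v‖ + -‖v‖ ^ 2 / 2) := by rw [mul_assoc, ← exp_add]
    _ ≤ k.factorial * exp (2 + -(1 / 4) * ‖v‖ ^ 2) := by gcongr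
    _ = k.factorial * exp 2 * exp (-(1 / 4) * ‖v‖ ^ 2) := by rw [exp_add, mul_assoc]

variable [InnerProductSpace ℝ E]

theorem hasFDerivAt_gaussianWeight (v : E) :
    HasFDerivAt gaussianWeight (-(gaussianWeight v • innerSL ℝ v)) v := by
  have hexponent : HasFDerivAt (fun w : E ↦ -‖w‖ ^ 2 / 2) (-innerSL ℝ v) v := by
    convert! (hasStrictFDerivAt_norm_sq v).hasFDerivAt.fun_neg.mul_const (2⁻¹ : ℝ) using 1
    ext w
    simp
  convert! hexponent.exp using 1
  rw [smul_neg]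
  rfl

variable [FiniteDimensional ℝ E] [MeasurableSpace E] [BorelSpace E]

theorem integrable_exp_neg_mul_norm_sq {b : ℝ} (hb : 0 < b) :
    Integrable fun v : E ↦ exp (-b * ‖v‖ ^ 2) := by
  have h := (GaussianFourier.integrable_cexp_neg_mul_sq_norm_add (V := E) (b := b)
    (by simpa using hb) 0 0).norm
  simpa [Complex.norm_exp, ← Complex.ofReal_pow] using h

theorem integrable_mul_gaussianWeight {f : E → ℝ} (hf : f.HasTemperateGrowth) :
    Integrable fun v ↦ f v * gaussianWeight v := by
  obtain ⟨k, C, hC₀, hC⟩ := hf.norm_iteratedFDeriv_le_uniform 0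
  have hbound (v : E) : ‖f v‖ ≤ C * (1 + ‖v‖) ^ k := by simpa using hC 0 le_rfl v
  have hcont : Continuous fun v : E ↦ f v * gaussianWeight v :=
    hf.1.continuous.mul (by unfold gaussianWeight; fun_prop)
  refine ((integrable_exp_neg_mul_norm_sq (by norm_num : (0 : ℝ) < 1 / 4)).const_mul
    (C * (k.factorial * exp 2))).mono' hcont.aestronglyMeasurable (.of_forall fun v ↦ ?_)
  have hweight : 0 ≤ gaussianWeight v := (exp_pos _).le
  calc ‖f v * gaussianWeight v‖ = ‖f v‖ * gaussianWeight v := by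
        rw [norm_mul, norm_of_nonneg hweight]
    _ ≤ C * (1 + ‖v‖) ^ k * gaussianWeight v := by gcongr; exact hbound v
    _ = C * ((1 + ‖v‖) ^ k * gaussianWeight v) := mul_assoc _ _ _
    _ ≤ C * (k.factorial * exp 2 * exp (-(1 / 4) * ‖v‖ ^ 2)) :=
        mul_le_mul_of_nonneg_left (one_add_norm_pow_mul_gaussianWeight_le k v) hC₀
    _ = C * (k.factorial * exp 2) * exp (-(1 / 4) * ‖v‖ ^ 2) := (mul_assoc _ _ _).symm

theorem integral_inner_mul_mul_gaussianWeight {f : E → ℝ} (hf : f.HasTemperateGrowth) (c : E) :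
    ∫ v, ⟪c, v⟫ * f v * gaussianWeight v = ∫ v, fderiv ℝ f v c * gaussianWeight v := by
  have hderiv (v : E) : f v * fderiv ℝ gaussianWeight v c = -(⟪c, v⟫ * f v * gaussianWeight v) := by
    simp only [(hasFDerivAt_gaussianWeight v).fderiv, neg_apply, smul_apply,
      innerSL_apply_apply, smul_eq_mul, real_inner_comm c v]
    ring
  have hparts := integral_mul_fderiv_eq_neg_fderiv_mul_of_integrable
    (f := f) (g := gaussianWeight) (v := c) (μ := volume)
    (integrable_mul_gaussianWeight (hasTemperateGrowth_fderiv_apply hf c))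
    (by simpa only [hderiv] using (integrable_mul_gaussianWeight (by fun_prop)).fun_neg)
    (integrable_mul_gaussianWeight hf)
    (fun v _ ↦ hf.1.differentiable (by simp) v)
    (fun v _ ↦ (hasFDerivAt_gaussianWeight v).differentiableAt)
  simpa only [hderiv, integral_neg, neg_inj] using hparts

theorem integral_inner_map_mul_mul_gaussianWeight (A : E →L[ℝ] E) {f : E → ℝ}
    (hf : f.HasTemperateGrowth) :
    ∫ v, ⟪A v, v⟫ * f v * gaussianWeight v =
      LinearMap.trace ℝ E A * (∫ v, f v * gaussianWeight v) +
        ∫ v, fderiv ℝ f v (A v) * gaussianWeight v := by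
  let e := stdOrthonormalBasis ℝ E
  let ℓ (i) : E →L[ℝ] ℝ := (innerSL ℝ (e i)).comp A
  have hℓ (i) : (fun v ↦ ℓ i v).HasTemperateGrowth := (ℓ i).hasTemperateGrowth
  have hint (i) : Integrable fun v ↦ ℓ i v * fderiv ℝ f v (e i) * gaussianWeight v :=
    integrable_mul_gaussianWeight ((hℓ i).fun_mul (hasTemperateGrowth_fderiv_apply hf (e i)))
  have hquad (v : E) : ⟪A v, v⟫ = ∑ i, ⟪e i, v⟫ * ℓ i v := by
    rw [← e.sum_inner_mul_inner (A v) v]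
    exact Finset.sum_congr rfl fun i _ ↦ by rw [real_inner_comm, mul_comm]; rfl
  have hdir (v : E) : fderiv ℝ f v (A v) = ∑ i, ℓ i v * fderiv ℝ f v (e i) := by
    conv_lhs => rw [← e.sum_repr' (A v)]
    simp [ℓ]
  have htrace : LinearMap.trace ℝ E A = ∑ i, ℓ i (e i) := LinearMap.trace_eq_sum_inner _ e
  calc ∫ v, ⟪A v, v⟫ * f v * gaussianWeight v
      = ∑ i, ∫ v, ⟪e i, v⟫ * (ℓ i v * f v) * gaussianWeight v := by
        rw [← integral_finsetSum _ fun i _ ↦ integrable_mul_gaussianWeight (by fun_prop)]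
        simp only [hquad, Finset.sum_mul, mul_assoc]
    _ = ∑ i, (ℓ i (e i) * (∫ v, f v * gaussianWeight v) +
          ∫ v, ℓ i v * fderiv ℝ f v (e i) * gaussianWeight v) := by
        refine Finset.sum_congr rfl fun i _ ↦ ?_
        rw [integral_inner_mul_mul_gaussianWeight (by fun_prop), ← integral_const_mul,
          ← integral_add ((integrable_mul_gaussianWeight hf).const_mul _) (hint i)]
        simp only [fderiv_map_mul_apply (ℓ i) (hf.1.differentiable (by simp) _), add_mul,
          mul_assoc]
    _ = _ := by
        rw [Finset.sum_add_distrib, ← Finset.sum_mul, htrace,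
          ← integral_finsetSum _ fun i _ ↦ hint i]
        simp only [hdir, Finset.sum_mul]

theorem integral_norm_sq_mul_gaussianWeight :
    ∫ v : E, ‖v‖ ^ 2 * gaussianWeight v = Module.finrank ℝ E * ∫ v : E, gaussianWeight v := by
  simpa using
    integral_inner_map_mul_mul_gaussianWeight (ContinuousLinearMap.id ℝ E) (f := fun _ ↦ 1)
      (.const 1)

theorem integral_inner_mul_map_mul_gaussianWeight (c : E) (ℓ : E →L[ℝ] ℝ) :
    ∫ v, ⟪c, v⟫ * ℓ v * gaussianWeight v = ℓ c * ∫ v : E, gaussianWeight v := by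
  simpa [integral_const_mul] using
    integral_inner_mul_mul_gaussianWeight ℓ.hasTemperateGrowth c

end GaussianWeight

section TracelessQuadratic

variable {E : Type*} [NormedAddCommGroup E] [InnerProductSpace ℝ E] [FiniteDimensional ℝ E]
  [MeasurableSpace E] [BorelSpace E] {A : E →L[ℝ] E}

theorem integral_inner_map_mul_gaussianWeight_eq_zero (hA : LinearMap.trace ℝ E A = 0) :
    ∫ v, ⟪A v, v⟫ * gaussianWeight v = 0 := by
  simpa [hA] using
    integral_inner_map_mul_mul_gaussianWeight A (f := fun _ ↦ 1) (.const 1)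

theorem integral_inner_map_mul_norm_sq_mul_gaussianWeight_eq_zero
    (hA : LinearMap.trace ℝ E A = 0) :
    ∫ v, ⟪A v, v⟫ * ‖v‖ ^ 2 * gaussianWeight v = 0 := by
  have h := integral_inner_map_mul_mul_gaussianWeight A (f := fun v ↦ ‖v‖ ^ 2) (by fun_prop)
  have hfderiv (v : E) : fderiv ℝ (fun w : E ↦ ‖w‖ ^ 2) v (A v) = 2 * ⟪A v, v⟫ := by
    simp [fderiv_norm_sq_apply, real_inner_comm]
  simpa only [hA, zero_mul, zero_add, hfderiv, mul_assoc, integral_const_mul,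
    integral_inner_map_mul_gaussianWeight_eq_zero hA, mul_zero] using h

theorem integral_inner_map_mul_inner_mul_gaussianWeight_eq_zero (A : E →L[ℝ] E) (c : E) :
    ∫ v, ⟪A v, v⟫ * ⟪c, v⟫ * gaussianWeight v = 0 :=
  integral_eq_zero_of_odd (fun v ↦ by simp [even_gaussianWeight v]) volume

end TracelessQuadratic

section BurnettField

variable {E : Type*} [NormedAddCommGroup E] [InnerProductSpace ℝ E]

/-- The Burnett heat-flux field `B(v) = (|v|² - (d + 2)) v / 2` in dimension `d`: the coefficient of
`∇θ` in `v · ∇ₓ f₁`. The constant `d + 2` is the one for which `B` is Gaussian-orthogonal to all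
linear functions. -/
def burnettField (v : E) : E :=
  ((‖v‖ ^ 2 - (Module.finrank ℝ E + 2)) / 2) • v

theorem odd_burnettField : (burnettField : E → E).Odd := fun v ↦ by
  simp [burnettField]

theorem hasTemperateGrowth_map_burnettField (ℓ : E →L[ℝ] ℝ) :
    (fun v ↦ ℓ (burnettField v)).HasTemperateGrowth := by
  have hℓ := ℓ.hasTemperateGrowth
  simp only [burnettField, map_smul, smul_eq_mul, div_eq_mul_inv]
  fun_prop

theorem fderiv_map_burnettField_apply (ℓ : E →L[ℝ] ℝ) (v c : E) :
    fderiv ℝ (fun w ↦ ℓ (burnettField w)) v c =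
      (‖v‖ ^ 2 - (Module.finrank ℝ E + 2)) / 2 * ℓ c + ⟪c, v⟫ * ℓ v := by
  have h : HasFDerivAt (fun w : E ↦ (‖w‖ ^ 2 - (Module.finrank ℝ E + 2)) * 2⁻¹) _ v :=
    ((hasStrictFDerivAt_norm_sq v).hasFDerivAt.sub_const _).mul_const (2⁻¹ : ℝ)
  simp only [burnettField, map_smul, smul_eq_mul, div_eq_mul_inv, mul_comm _ (ℓ _)]
  rw [fderiv_map_mul_apply ℓ h.differentiableAt, h.fderiv]
  simp [real_inner_comm c v]

variable [FiniteDimensional ℝ E] [MeasurableSpace E] [BorelSpace E] (ℓ : E →L[ℝ] ℝ)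

theorem integral_map_burnettField_mul_gaussianWeight_eq_zero :
    ∫ v, ℓ (burnettField v) * gaussianWeight v = 0 :=
  integral_eq_zero_of_odd
    (fun v ↦ by simp [odd_burnettField v, even_gaussianWeight v]) volume

theorem integral_map_burnettField_mul_norm_sq_mul_gaussianWeight_eq_zero :
    ∫ v, ℓ (burnettField v) * ‖v‖ ^ 2 * gaussianWeight v = 0 :=
  integral_eq_zero_of_odd
    (fun v ↦ by simp [odd_burnettField v, even_gaussianWeight v]) volume

theorem integral_map_burnettField_mul_inner_mul_gaussianWeight_eq_zero (c : E) :
    ∫ v, ℓ (burnettField v) * ⟪c, v⟫ * gaussianWeight v = 0 := by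
  have hconst := integrable_mul_gaussianWeight (E := E) (.const 1)
  have hnorm := integrable_mul_gaussianWeight (Function.hasTemperateGrowth_norm_sq E)
  have hℓ := ℓ.hasTemperateGrowth
  have hprod := integrable_mul_gaussianWeight (f := fun v ↦ ⟪c, v⟫ * ℓ v) (by fun_prop)
  simp only [one_mul] at hconst
  set d : ℝ := ↑(Module.finrank ℝ E)
  calc ∫ v, ℓ (burnettField v) * ⟪c, v⟫ * gaussianWeight v
      = ∫ v, ((‖v‖ ^ 2 - (d + 2)) / 2 * ℓ c + ⟪c, v⟫ * ℓ v) * gaussianWeight v := by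
        simpa only [fderiv_map_burnettField_apply, mul_comm ⟪c, _⟫ (ℓ (burnettField _))] using
          integral_inner_mul_mul_gaussianWeight (hasTemperateGrowth_map_burnettField ℓ) c
    _ = ∫ v, (ℓ c / 2 * (‖v‖ ^ 2 * gaussianWeight v + -(d + 2) * gaussianWeight v) +
          ⟪c, v⟫ * ℓ v * gaussianWeight v) := by
        congr with v
        ring
    _ = ℓ c / 2 * ((d + -(d + 2)) * ∫ v : E, gaussianWeight v) +
          ℓ c * ∫ v : E, gaussianWeight v := by
        rw [integral_add ((hnorm.fun_add (hconst.const_mul _)).const_mul _) hprod,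
          integral_const_mul, integral_add hnorm (hconst.const_mul _), integral_const_mul,
          integral_norm_sq_mul_gaussianWeight, integral_inner_mul_map_mul_gaussianWeight, add_mul]
    _ = 0 := by ring

end BurnettField

section HilbertCorrection

theorem sqrt_globalMaxwellian_mul_self (v : EuclideanSpace ℝ (Fin 3)) :
    √(globalMaxwellian v) * √(globalMaxwellian v) =
      (2 * π) ^ (-(3 : ℝ) / 2) * gaussianWeight v :=
  mul_self_sqrt (by unfold globalMaxwellian; positivity)

theorem trace_eq_sum_apply_single {ι : Type*} [Fintype ι] [DecidableEq ι]
    (T : EuclideanSpace ℝ ι →ₗ[ℝ] EuclideanSpace ℝ ι) :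
    LinearMap.trace ℝ _ T = ∑ i, T (EuclideanSpace.single i 1) i := by
  simp [LinearMap.trace_eq_sum_inner T (EuclideanSpace.basisFun ι ℝ),
    EuclideanSpace.inner_single_left]

variable {ρ θ : EuclideanSpace ℝ (Fin 3) → ℝ}
  {u : EuclideanSpace ℝ (Fin 3) → EuclideanSpace ℝ (Fin 3)} {x : EuclideanSpace ℝ (Fin 3)}

theorem fderiv_hilbertFirst_apply (hρ : DifferentiableAt ℝ ρ x) (hθ : DifferentiableAt ℝ θ x)
    (hu : DifferentiableAt ℝ u x) (v w : EuclideanSpace ℝ (Fin 3)) :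
    fderiv ℝ (fun y ↦ hilbertFirst ρ θ u y v) x w =
      (fderiv ℝ ρ x w + ⟪fderiv ℝ u x w, v⟫ + fderiv ℝ θ x w * (‖v‖ ^ 2 - 3) / 2) *
        √(globalMaxwellian v) := by
  have h : HasFDerivAt (fun y ↦ hilbertFirst ρ θ u y v) _ x :=
    ((hρ.hasFDerivAt.add (hu.hasFDerivAt.inner ℝ (hasFDerivAt_const v x))).add
      ((hθ.hasFDerivAt.mul_const (‖v‖ ^ 2 - 3)).mul_const (2⁻¹ : ℝ))).mul_const
      √(globalMaxwellian v)
  rw [h.fderiv]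
  simp only [smul_add, add_apply, smul_apply, smul_eq_mul, ContinuousLinearMap.comp_apply,
    ContinuousLinearMap.prod_apply, zero_apply, fderivInnerCLM_apply, inner_zero_right, zero_add]
  ring

theorem fderiv_hilbertFirst_apply_self (hρ : DifferentiableAt ℝ ρ x)
    (hθ : DifferentiableAt ℝ θ x) (hu : DifferentiableAt ℝ u x)
    (hBoussinesq : fderiv ℝ (fun y ↦ ρ y + θ y) x = 0) (v : EuclideanSpace ℝ (Fin 3)) :
    fderiv ℝ (fun y ↦ hilbertFirst ρ θ u y v) x v =
      (⟪fderiv ℝ u x v, v⟫ + fderiv ℝ θ x (burnettField v)) * √(globalMaxwellian v) := by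
  have hρθ : fderiv ℝ ρ x v + fderiv ℝ θ x v = 0 := by
    simpa [fderiv_fun_add hρ hθ] using DFunLike.congr_fun hBoussinesq v
  rw [fderiv_hilbertFirst_apply hρ hθ hu, eq_neg_of_add_eq_zero_left hρθ]
  simp only [burnettField, map_smul, smul_eq_mul, finrank_euclideanSpace_fin, Nat.cast_ofNat]
  ring

theorem integral_fderiv_hilbertFirst_mul_eq_zero (hρ : DifferentiableAt ℝ ρ x)
    (hθ : DifferentiableAt ℝ θ x) (hu : DifferentiableAt ℝ u x)
    (hBoussinesq : fderiv ℝ (fun y ↦ ρ y + θ y) x = 0)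
    {φ : EuclideanSpace ℝ (Fin 3) → ℝ} (hφ : φ.HasTemperateGrowth)
    (hviscous : ∫ v, ⟪fderiv ℝ u x v, v⟫ * φ v * gaussianWeight v = 0)
    (hheat : ∫ v, fderiv ℝ θ x (burnettField v) * φ v * gaussianWeight v = 0) :
    ∫ v, fderiv ℝ (fun y ↦ hilbertFirst ρ θ u y v) x v * (φ v * √(globalMaxwellian v)) = 0 := by
  have hquad : (fun v ↦ ⟪fderiv ℝ u x v, v⟫).HasTemperateGrowth :=
    (innerSL ℝ).bilinear_hasTemperateGrowth (fderiv ℝ u x).hasTemperateGrowth .id'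
  have hburnett := hasTemperateGrowth_map_burnettField (fderiv ℝ θ x)
  have hsplit (v : EuclideanSpace ℝ (Fin 3)) :
      fderiv ℝ (fun y ↦ hilbertFirst ρ θ u y v) x v * (φ v * √(globalMaxwellian v)) =
        (2 * π) ^ (-(3 : ℝ) / 2) * (⟪fderiv ℝ u x v, v⟫ * φ v * gaussianWeight v +
          fderiv ℝ θ x (burnettField v) * φ v * gaussianWeight v) := by
    rw [fderiv_hilbertFirst_apply_self hρ hθ hu hBoussinesq]
    linear_combination (⟪fderiv ℝ u x v, v⟫ + fderiv ℝ θ x (burnettField v)) * φ v *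
      sqrt_globalMaxwellian_mul_self v
  simp only [hsplit]
  rw [integral_const_mul, integral_add (integrable_mul_gaussianWeight (hquad.fun_mul hφ))
    (integrable_mul_gaussianWeight (hburnett.fun_mul hφ)), hviscous, hheat, add_zero, mul_zero]

end HilbertCorrection

/-- Under incompressibility `∇·u(x) = 0` and the Boussinesq relation `∇(ρ+θ)(x) = 0`, the
hydrodynamic projection of `v·∇ₓ f₁` vanishes: its moments against `φ(v)√μ(v)` vanish for
every `φ ∈ {1, v₁, v₂, v₃, |v|²/2}`. -/
theorem hydrodynamic_projection_vanishes
    (ρ θ : EuclideanSpace ℝ (Fin 3) → ℝ)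
    (u : EuclideanSpace ℝ (Fin 3) → EuclideanSpace ℝ (Fin 3))
    (U : Set (EuclideanSpace ℝ (Fin 3))) (hU : IsOpen U)
    (x : EuclideanSpace ℝ (Fin 3)) (hx : x ∈ U)
    (hρ : DifferentiableAt ℝ ρ x) (hθ : DifferentiableAt ℝ θ x)
    (hu : DifferentiableAt ℝ u x)
    (hdiv : ∑ i : Fin 3, fderiv ℝ u x (EuclideanSpace.single i 1) i = 0)
    (hBoussinesq : fderiv ℝ (fun y => ρ y + θ y) x = 0) :
    ((∫ v : EuclideanSpace ℝ (Fin 3),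
        fderiv ℝ (fun y => hilbertFirst ρ θ u y v) x v * Real.sqrt (globalMaxwellian v)) = 0) ∧
    (∀ i : Fin 3,
      (∫ v : EuclideanSpace ℝ (Fin 3),
          fderiv ℝ (fun y => hilbertFirst ρ θ u y v) x v *
            (v i * Real.sqrt (globalMaxwellian v))) = 0) ∧
    ((∫ v : EuclideanSpace ℝ (Fin 3),
        fderiv ℝ (fun y => hilbertFirst ρ θ u y v) x v *
          (‖v‖ ^ 2 / 2 * Real.sqrt (globalMaxwellian v))) = 0) := by
  have hA : LinearMap.trace ℝ _ (fderiv ℝ u x).toLinearMap = 0 := by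
    rw [trace_eq_sum_apply_single]
    exact hdiv
  have moment {φ : EuclideanSpace ℝ (Fin 3) → ℝ} :=
    integral_fderiv_hilbertFirst_mul_eq_zero (φ := φ) hρ hθ hu hBoussinesq
  refine ⟨?mass, fun i ↦ ?momentum, ?energy⟩
  case mass =>
    simpa using moment (.const 1)
      (by simpa using integral_inner_map_mul_gaussianWeight_eq_zero hA)
      (by simpa using integral_map_burnettField_mul_gaussianWeight_eq_zero (fderiv ℝ θ x))
  case momentum =>
    simpa [EuclideanSpace.inner_single_left] using
      moment (φ := fun v ↦ ⟪EuclideanSpace.single i 1, v⟫) (by fun_prop)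
        (integral_inner_map_mul_inner_mul_gaussianWeight_eq_zero _ _)
        (integral_map_burnettField_mul_inner_mul_gaussianWeight_eq_zero _ _)
  case energy =>
    have h := moment (by fun_prop)
      (integral_inner_map_mul_norm_sq_mul_gaussianWeight_eq_zero hA)
      (integral_map_burnettField_mul_norm_sq_mul_gaussianWeight_eq_zero _)
    simp only [div_mul_eq_mul_div, ← mul_div_assoc, integral_div, h, zero_div]
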